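/- Suppose g is differentiable on I (so h = g/ψ is differentiable on I), p* ∈ I is the unique point of I with h'(p*) = 0, and h is twice differentiable at p* with h''(p*) < 0 (equivalently, the pair (H, p*) with H = h(p*)ψ is the unique solution of the free-boundary problem and H''(p*) > g''(p*)). Then h'(p) > 0 for all p ∈ (l, p*) and h'(p) < 0 for all p ∈ (p*, r); consequently p* is optimal over the class of threshold stopping times, i.e., V(p*;x) ≥ V(p;x) for all p, x ∈ I. -/

import Mathlib

open Set

/-!
By Darboux's theorem `h'` has constant sign on each side of its only zero `p*`, and `h''(p*) < 0`
says which sign; so `h` increases up to `p*` and decreases afterwards. Stopping at the threshold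
`p` from `x` means stopping at `max p x`, hence `V(p; x) = h (max p x) * ψ x`, and on the points
at or above `x` the unimodal `h` is largest at `max p* x`.
-/

open Filter Topology

section SignOfDeriv

variable {f : ℝ → ℝ} {s : Set ℝ} {a b c : ℝ}

theorem deriv_pos_of_frequently_nhdsLT (hac : a < c) (hne : ∀ x ∈ Ico a c, deriv f x ≠ 0)
    (hpos : ∃ᶠ x in 𝓝[<] c, 0 < deriv f x) : 0 < deriv f a := by
  obtain ⟨y, hy, hay, hyc⟩ := (hpos.and_eventually (Ioo_mem_nhdsLT hac)).exists
  have hsub : Icc a y ⊆ Ico a c := Icc_subset_Ico_right hyc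
  have hdarboux : (deriv f '' Icc a y).OrdConnected := ordConnected_Icc.image_deriv
    fun x hx ↦ differentiableAt_of_deriv_ne_zero (hne x (hsub hx))
  by_contra! ha
  obtain ⟨z, hz, hz0⟩ := hdarboux.out (mem_image_of_mem _ (left_mem_Icc.2 hay.le))
    (mem_image_of_mem _ (right_mem_Icc.2 hay.le)) ⟨ha, hy.le⟩
  exact hne z (hsub hz) hz0

theorem deriv_neg_of_frequently_nhdsGT (hcb : c < b) (hne : ∀ x ∈ Ioc c b, deriv f x ≠ 0)
    (hneg : ∃ᶠ x in 𝓝[>] c, deriv f x < 0) : deriv f b < 0 := by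
  obtain ⟨y, hy, hcy, hyb⟩ := (hneg.and_eventually (Ioo_mem_nhdsGT hcb)).exists
  have hsub : Icc y b ⊆ Ioc c b := Icc_subset_Ioc_left hcy
  have hdarboux : (deriv f '' Icc y b).OrdConnected := ordConnected_Icc.image_deriv
    fun x hx ↦ differentiableAt_of_deriv_ne_zero (hne x (hsub hx))
  by_contra! hb
  obtain ⟨z, hz, hz0⟩ := hdarboux.out (mem_image_of_mem _ (left_mem_Icc.2 hyb.le))
    (mem_image_of_mem _ (right_mem_Icc.2 hyb.le)) ⟨hy.le, hb⟩
  exact hne z (hsub hz) hz0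

theorem deriv_pos_of_lt_of_deriv_deriv_neg (hac : a < c) (hne : ∀ x ∈ Ico a c, deriv f x ≠ 0)
    (hc : deriv f c = 0) (hneg : deriv (deriv f) c < 0) : 0 < deriv f a :=
  deriv_pos_of_frequently_nhdsLT hac hne <| Eventually.frequently <|
    deriv_pos_left_of_sign_deriv <| eventually_nhdsWithin_of_eventually_nhds <|
      eventually_nhdsWithin_sign_eq_of_deriv_neg hneg hc

theorem deriv_neg_of_gt_of_deriv_deriv_neg (hcb : c < b) (hne : ∀ x ∈ Ioc c b, deriv f x ≠ 0)
    (hc : deriv f c = 0) (hneg : deriv (deriv f) c < 0) : deriv f b < 0 :=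
  deriv_neg_of_frequently_nhdsGT hcb hne <| Eventually.frequently <|
    deriv_neg_right_of_sign_deriv <| eventually_nhdsWithin_of_eventually_nhds <|
      eventually_nhdsWithin_sign_eq_of_deriv_neg hneg hc

theorem strictMonoOn_inter_Iic_of_deriv_pos (hs : s.OrdConnected) (hc : ContinuousAt f c)
    (hpos : ∀ x ∈ s, x < c → 0 < deriv f x) : StrictMonoOn f (s ∩ Iic c) := by
  refine strictMonoOn_of_deriv_pos (hs.convex.inter (convex_Iic c)) ?_ ?_
  · rintro x ⟨hxs, hxc⟩
    rcases eq_or_lt_of_le (mem_Iic.1 hxc) with rfl | hlt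
    · exact hc.continuousWithinAt
    · have hdiff := differentiableAt_of_deriv_ne_zero (hpos x hxs hlt).ne'
      exact hdiff.continuousAt.continuousWithinAt
  · intro x hx
    rw [interior_inter, interior_Iic] at hx
    exact hpos x (interior_subset hx.1) hx.2

theorem strictAntiOn_inter_Ici_of_deriv_neg (hs : s.OrdConnected) (hc : ContinuousAt f c)
    (hneg : ∀ x ∈ s, c < x → deriv f x < 0) : StrictAntiOn f (s ∩ Ici c) := by
  refine strictAntiOn_of_deriv_neg (hs.convex.inter (convex_Ici c)) ?_ ?_
  · rintro x ⟨hxs, hcx⟩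
    rcases eq_or_lt_of_le (mem_Ici.1 hcx) with rfl | hlt
    · exact hc.continuousWithinAt
    · have hdiff := differentiableAt_of_deriv_ne_zero (hneg x hxs hlt).ne
      exact hdiff.continuousAt.continuousWithinAt
  · intro x hx
    rw [interior_inter, interior_Ici] at hx
    exact hneg x (interior_subset hx.1) hx.2

end SignOfDeriv

theorem apply_max_le_apply_max_of_mono_anti {α β : Type*} [LinearOrder α] [Preorder β]
    {f : α → β} {s : Set α} {c p x : α} (hmono : MonotoneOn f (s ∩ Iic c))
    (hanti : AntitoneOn f (s ∩ Ici c)) (hc : c ∈ s) (hp : p ∈ s) (hx : x ∈ s) :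
    f (max p x) ≤ f (max c x) := by
  have hpx : max p x ∈ s := max_rec' (· ∈ s) hp hx
  have hcx : max c x ∈ s := max_rec' (· ∈ s) hc hx
  rcases le_total (max p x) c with hle | hle
  · rw [max_eq_left ((le_max_right p x).trans hle)]
    exact hmono ⟨hpx, hle⟩ ⟨hc, self_mem_Iic⟩ hle
  · exact hanti ⟨hcx, le_max_left c x⟩ ⟨hpx, hle⟩ (max_le hle (le_max_right p x))

section ThresholdValue

variable {α 𝕜 : Type*} [LinearOrder α] [Field 𝕜]

/-- The value `V(p; x)` of stopping at the threshold `p` when starting from `x`, for the payoff `g`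
and the increasing fundamental solution `ψ`: below `p` the payoff `g p` is discounted by
`ψ x / ψ p`, and from `p` on the payoff `g x` is collected at once. -/
def thresholdValue (g ψ : α → 𝕜) (p x : α) : 𝕜 :=
  if x < p then (g / ψ) p * ψ x else g x

variable {g ψ : α → 𝕜} {s : Set α} {c p x : α}

theorem thresholdValue_eq_div_max_mul (p : α) (hx : ψ x ≠ 0) :
    thresholdValue g ψ p x = (g / ψ) (max p x) * ψ x := by
  rcases lt_or_ge x p with hxp | hpx
  · rw [thresholdValue, if_pos hxp, max_eq_left hxp.le]
  · rw [thresholdValue, if_neg hpx.not_gt, max_eq_right hpx, Pi.div_apply, div_mul_cancel₀ _ hx]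

theorem thresholdValue_le_of_mono_anti [LinearOrder 𝕜] [IsStrictOrderedRing 𝕜]
    (hmono : MonotoneOn (g / ψ) (s ∩ Iic c)) (hanti : AntitoneOn (g / ψ) (s ∩ Ici c))
    (hc : c ∈ s) (hp : p ∈ s) (hx : x ∈ s) (hψ : 0 < ψ x) :
    thresholdValue g ψ p x ≤ thresholdValue g ψ c x := by
  rw [thresholdValue_eq_div_max_mul p hψ.ne', thresholdValue_eq_div_max_mul c hψ.ne']
  exact mul_le_mul_of_nonneg_right
    (apply_max_le_apply_max_of_mono_anti hmono hanti hc hp hx) hψ.le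

end ThresholdValue

theorem stmt_7_general {I : Set ℝ} (hI : I.OrdConnected) {g ψ : ℝ → ℝ}
    (hψ : ∀ x ∈ I, 0 < ψ x) {c : ℝ} (hcI : c ∈ I) (hc : HasDerivAt (g / ψ) 0 c)
    (huniq : ∀ p ∈ I, deriv (g / ψ) p = 0 → p = c) (hneg : deriv (deriv (g / ψ)) c < 0) :
    (∀ p ∈ I, p < c → 0 < deriv (g / ψ) p) ∧
    (∀ p ∈ I, c < p → deriv (g / ψ) p < 0) ∧
    (∀ p ∈ I, ∀ x ∈ I, thresholdValue g ψ p x ≤ thresholdValue g ψ c x) := by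
  have hpos_left : ∀ p ∈ I, p < c → 0 < deriv (g / ψ) p := fun p hp hpc ↦
    deriv_pos_of_lt_of_deriv_deriv_neg hpc
      (fun x hx hx0 ↦ hx.2.ne (huniq x (hI.out hp hcI (Ico_subset_Icc_self hx)) hx0)) hc.deriv hneg
  have hneg_right : ∀ p ∈ I, c < p → deriv (g / ψ) p < 0 := fun p hp hcp ↦
    deriv_neg_of_gt_of_deriv_deriv_neg hcp
      (fun x hx hx0 ↦ hx.1.ne' (huniq x (hI.out hcI hp (Ioc_subset_Icc_self hx)) hx0)) hc.deriv hneg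
  have hmono := strictMonoOn_inter_Iic_of_deriv_pos hI hc.continuousAt hpos_left
  have hanti := strictAntiOn_inter_Ici_of_deriv_neg hI hc.continuousAt hneg_right
  exact ⟨hpos_left, hneg_right, fun p hp x hx ↦
    thresholdValue_le_of_mono_anti hmono.monotoneOn hanti.antitoneOn hcI hp hx (hψ x hx)⟩

/-- Proposition 2, case 1: if `pstar` is the unique stationary point of `h = g/ψ` on `I`
and `h''(pstar) < 0` (i.e. `(H, pstar)` is the unique solution of the free-boundary
problem with `H''(pstar) > g''(pstar)`), then `h' > 0` on `(l, pstar)`, `h' < 0` on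
`(pstar, r)`, and `pstar` is optimal over the class of threshold stopping times. -/
theorem stmt_7 (I : Set ℝ) (hIopen : IsOpen I) (hIconn : I.OrdConnected)
    (hIne : I.Nonempty)
    (a σ : ℝ → ℝ) (ρ : ℝ) (hρ : 0 < ρ)
    (ha : ContinuousOn a I) (hσ : ContinuousOn σ I) (hσpos : ∀ x ∈ I, 0 < σ x)
    (g ψ : ℝ → ℝ) (hψpos : ∀ x ∈ I, 0 < ψ x) (hψmono : StrictMonoOn ψ I)
    (hψd : ∀ x ∈ I, DifferentiableAt ℝ ψ x)
    (hψd2 : ∀ x ∈ I, DifferentiableAt ℝ (deriv ψ) x)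
    (hODE : ∀ x ∈ I, (1/2) * σ x ^ 2 * deriv (deriv ψ) x + a x * deriv ψ x = ρ * ψ x)
    (hgd : ∀ x ∈ I, DifferentiableAt ℝ g x)
    (h : ℝ → ℝ) (hh : ∀ p, h p = g p / ψ p)
    (V : ℝ → ℝ → ℝ)
    (hV : ∀ p ∈ I, ∀ x ∈ I, V p x = if x < p then h p * ψ x else g x)
    (pstar : ℝ) (hpstar : pstar ∈ I)
    (hstat : deriv h pstar = 0)
    (huniq : ∀ p ∈ I, deriv h p = 0 → p = pstar)
    (h'' : ℝ) (hh'' : HasDerivAt (deriv h) h'' pstar) (hneg : h'' < 0) :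
    (∀ p ∈ I, p < pstar → 0 < deriv h p) ∧
    (∀ p ∈ I, pstar < p → deriv h p < 0) ∧
    (∀ p ∈ I, ∀ x ∈ I, V p x ≤ V pstar x) := by
  obtain rfl : h = g / ψ := funext hh
  have hcrit : HasDerivAt (g / ψ) 0 pstar :=
    hstat ▸ ((hgd _ hpstar).div (hψd _ hpstar) (hψpos _ hpstar).ne').hasDerivAt
  have hV_eq : ∀ p ∈ I, ∀ x ∈ I, V p x = thresholdValue g ψ p x := hV
  simpa +contextual only [hV_eq, hpstar] using
    stmt_7_general hIconn hψpos hpstar hcrit huniq (hh''.deriv.trans_lt hneg)
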